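/- Let S² be the unit sphere in ℝ³ and let n > 3. Let Conf_n(S²) = {f : Fin n → S² | f injective} be the ordered configuration space of n points on S², with basepoint x, and let Conf_3(S²) be the ordered configuration space of 3 points on S², with basepoint given by the first three coordinates of x. Then there exists a surjective group homomorphism from π₁(Conf_n(S²), x) onto π₁(Conf_3(S²)) whose kernel is isomorphic to the fundamental group of the configuration space of n − 3 points in ℂ ∖ {p₁, p₂}, where p₁ ≠ p₂ are two distinct points of ℂ; that is, there is a short exact sequence 1 → π₁(M²_{n−3}(ℂ)) → B_n(S²) → B_3(S²) → 1. -/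

import Mathlib

/-- The 2-sphere: the unit sphere in `ℝ³`. -/
abbrev TwoSphere : Type := Metric.sphere (0 : EuclideanSpace ℝ (Fin 3)) 1

/-- The ordered configuration space of `n` points on the 2-sphere. -/
abbrev SphereConf (n : ℕ) : Type := {f : Fin n → TwoSphere // Function.Injective f}

/-- The configuration space of `m` points in `ℂ` avoiding the two points `p₁, p₂`. -/
abbrev ConfAvoidTwo (m : ℕ) (p₁ p₂ : ℂ) : Type :=
  {f : Fin m → ℂ // Function.Injective f ∧ ∀ i, f i ∉ ({p₁, p₂} : Set ℂ)}

/-!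
A configuration `g` of three points on the sphere determines a coordinate on the sphere: project
stereographically from `g 0` onto a plane, and use the unique similarity from this plane to `ℂ`
taking the images of `g 1` and `g 2` to `0` and `1`. This coordinate, a normalised cross-ratio,
depends continuously on `g` and identifies the complement of `{g 0, g 1, g 2}` with `ℂ ∖ {0, 1}`,
hence with `ℂ ∖ {p₁, p₂}`. Reading off the last `n - 3` points of a configuration in the coordinate
given by the first three yields `Conf_n(S²) ≃ Conf₃(S²) × M²_{n-3}(ℂ)` over `Conf₃(S²)`, so the
sequence of fundamental groups is that of a product.

Stereographic projection is realised by Mathlib's `EuclideanGeometry.inversion` with centre `g 0`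
and radius `1`, which swaps the punctured unit sphere with a plane orthogonal to `g 0`; the cross
product with `g 0` makes the direction of that plane a complex line.
-/

open EuclideanGeometry AffineSubspace
open scoped ContinuousMap Matrix RealInnerProductSpace

section Group

variable {G H K : Type*} [Group G] [Group H] [Group K]

theorem surjective_of_bijective_prod {φ : G →* H} {ψ : G →* K}
    (h : Function.Bijective (φ.prod ψ)) : Function.Surjective φ :=
  Prod.fst_surjective.comp h.surjective

theorem nonempty_ker_mulEquiv_of_bijective_prod {φ : G →* H} {ψ : G →* K}
    (h : Function.Bijective (φ.prod ψ)) : Nonempty (φ.ker ≃* K) := by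
  refine ⟨MulEquiv.ofBijective (ψ.comp φ.ker.subtype) ⟨fun a b hab => ?_, fun k => ?_⟩⟩
  · exact Subtype.ext (h.injective (Prod.ext (a.2.trans b.2.symm) hab))
  · obtain ⟨g, hg⟩ := h.surjective (1, k)
    exact ⟨⟨g, congrArg Prod.fst hg⟩, congrArg Prod.snd hg⟩

end Group

section FundamentalGroup

variable {X Y B F : Type*} [TopologicalSpace X] [TopologicalSpace Y] [TopologicalSpace B]
  [TopologicalSpace F]

theorem bijective_fundamentalGroup_map (e : X ≃ₕ Y) (x : X) :
    Function.Bijective (FundamentalGroup.map e.toFun x) :=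
  (FundamentalGroupoidFunctor.equivOfHomotopyEquiv e).fullyFaithfulFunctor.map_bijective _ _

theorem bijective_fundamentalGroup_map_fst_prod_map_snd (p : B × F) :
    Function.Bijective ((FundamentalGroup.map .fst p).prod (FundamentalGroup.map .snd p)) :=
  Function.bijective_iff_has_inverse.2 ⟨fun q => Path.Homotopic.prod q.1 q.2,
    Path.Homotopic.prod_projLeft_projRight,
    fun q => Prod.ext (Path.Homotopic.projLeft_prod q.1 q.2)
      (Path.Homotopic.projRight_prod q.1 q.2)⟩

theorem fundamentalGroup_map_comp (g : C(Y, B)) (f : C(X, Y)) (x : X) :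
    FundamentalGroup.map (g.comp f) x =
      (FundamentalGroup.map g (f x)).comp (FundamentalGroup.map f x) :=
  MonoidHom.ext fun _ => Path.Homotopic.Quotient.map_comp

theorem bijective_fundamentalGroup_map_prod (e : X ≃ₕ B × F) (x : X) :
    Function.Bijective ((FundamentalGroup.map (.comp .fst e.toFun) x).prod
      (FundamentalGroup.map (.comp .snd e.toFun) x)) := by
  rw [fundamentalGroup_map_comp, fundamentalGroup_map_comp]
  exact (bijective_fundamentalGroup_map_fst_prod_map_snd (e.toFun x)).comp
    (bijective_fundamentalGroup_map e x)

theorem surjective_fundamentalGroup_map_of_fst (e : X ≃ₕ B × F) {r : C(X, B)}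
    (hr : .comp .fst e.toFun = r) (x : X) : Function.Surjective (FundamentalGroup.map r x) := by
  subst hr
  exact surjective_of_bijective_prod (bijective_fundamentalGroup_map_prod e x)

theorem nonempty_ker_fundamentalGroup_map_mulEquiv_of_fst (e : X ≃ₕ B × F) {r : C(X, B)}
    (hr : .comp .fst e.toFun = r) (x : X) :
    Nonempty ((FundamentalGroup.map r x).ker ≃* FundamentalGroup F (e.toFun x).2) := by
  subst hr
  exact nonempty_ker_mulEquiv_of_bijective_prod (bijective_fundamentalGroup_map_prod e x)

end FundamentalGroup

section Configuration

/-- The ordered configuration space of `Y`; the points are indexed by an arbitrary type `ι`, so that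
configurations can be split along `ι ⊕ κ`. -/
abbrev OrderedConf (ι Y : Type*) : Type _ := {f : ι → Y // Function.Injective f}

/-- The total space of the bundle over `OrderedConf ι Y` whose fibre over a configuration is its
complement in `Y`. -/
abbrev ConfComplement (ι Y : Type*) : Type _ := {p : OrderedConf ι Y × Y // p.2 ∉ Set.range p.1.1}

theorem ConfComplement.ne_apply {ι Y : Type*} (p : ConfComplement ι Y) (i : ι) :
    p.1.2 ≠ p.1.1.1 i :=
  fun h => p.2 ⟨i, h.symm⟩

variable {ι κ Y F F' : Type*} [TopologicalSpace Y] [TopologicalSpace F] [TopologicalSpace F']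

theorem OrderedConf.continuous_eval (i : ι) : Continuous fun x : OrderedConf ι Y => x.1 i :=
  (continuous_apply i).comp continuous_subtype_val

/-- Restriction of a configuration along an embedding of the index types. -/
def OrderedConf.restrict (j : ι ↪ κ) : C(OrderedConf κ Y, OrderedConf ι Y) where
  toFun x := ⟨fun i => x.1 (j i), x.2.comp j.injective⟩
  continuous_toFun := Continuous.subtype_mk (continuous_pi fun i => continuous_eval (j i)) _

theorem OrderedConf.inr_notMem_range_restrict_inl (x : OrderedConf (ι ⊕ κ) Y) (k : κ) :
    x.1 (.inr k) ∉ Set.range (restrict .inl x).1 :=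
  fun ⟨_, h⟩ => Sum.inl_ne_inr (x.2 h)

/-- Reindexing of configurations along an equivalence of the index types. -/
def OrderedConf.reindex (e : ι ≃ κ) : OrderedConf κ Y ≃ₜ OrderedConf ι Y where
  toFun := restrict e.toEmbedding
  invFun := restrict e.symm.toEmbedding
  left_inv x := Subtype.ext (funext fun i => congrArg x.1 (e.apply_symm_apply i))
  right_inv x := Subtype.ext (funext fun i => congrArg x.1 (e.symm_apply_apply i))
  continuous_toFun := map_continuous _
  continuous_invFun := map_continuous _

/-- Configurations in a subspace as configurations in the ambient space that avoid the rest. -/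
def OrderedConf.subtypeHomeomorph (p : Y → Prop) :
    OrderedConf ι {y // p y} ≃ₜ {f : ι → Y // Function.Injective f ∧ ∀ i, p (f i)} where
  toFun x := ⟨fun i => x.1 i, Subtype.val_injective.comp x.2, fun i => (x.1 i).2⟩
  invFun f := ⟨fun i => ⟨f.1 i, f.2.2 i⟩, fun _ _ h => f.2.1 (congrArg Subtype.val h)⟩
  continuous_toFun := .subtype_mk
    (continuous_pi fun i => continuous_subtype_val.comp (continuous_eval i)) _
  continuous_invFun := .subtype_mk (continuous_pi fun i =>
    .subtype_mk ((continuous_apply i).comp continuous_subtype_val) _) _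

/-- A trivialization of the bundle `ConfComplement ι Y → OrderedConf ι Y` with fibre `F`: each
configuration `g` gives a coordinate `Y ∖ range g ≃ F` depending continuously on `g`. -/
structure ComplementTrivialization (ι Y F : Type*) [TopologicalSpace Y] [TopologicalSpace F] where
  coord : C(ConfComplement ι Y, F)
  point : C(OrderedConf ι Y × F, Y)
  point_notMem_range (q : OrderedConf ι Y × F) : point q ∉ Set.range q.1.1
  point_coord (p : ConfComplement ι Y) : point (p.1.1, coord p) = p.1.2
  coord_point (q : OrderedConf ι Y × F) : coord ⟨(q.1, point q), point_notMem_range q⟩ = q.2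

namespace ComplementTrivialization

/-- The trivialization obtained by changing the fibre along a homeomorphism. -/
def congrFiber (T : ComplementTrivialization ι Y F) (h : F ≃ₜ F') :
    ComplementTrivialization ι Y F' where
  coord := .comp h T.coord
  point := T.point.comp (.prodMap (.id _) h.symm)
  point_notMem_range q := T.point_notMem_range (q.1, h.symm q.2)
  point_coord p := by simp [T.point_coord]
  coord_point q := (congrArg h (T.coord_point (q.1, h.symm q.2))).trans (h.apply_symm_apply _)

variable (T : ComplementTrivialization ι Y F)

theorem coord_injective (g : OrderedConf ι Y) :
    Function.Injective fun y : {y // y ∉ Set.range g.1} => T.coord ⟨(g, y.1), y.2⟩ :=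
  fun y y' h => Subtype.ext <| (T.point_coord ⟨(g, y.1), y.2⟩).symm.trans <|
    (congrArg (fun c => T.point (g, c)) h).trans (T.point_coord ⟨(g, y'.1), y'.2⟩)

theorem point_injective (g : OrderedConf ι Y) : Function.Injective fun c => T.point (g, c) :=
  fun c c' h => by
    have hp : (⟨(g, T.point (g, c)), T.point_notMem_range (g, c)⟩ : ConfComplement ι Y) =
        ⟨(g, T.point (g, c')), T.point_notMem_range (g, c')⟩ := Subtype.ext (Prod.ext rfl h)
    exact (T.coord_point (g, c)).symm.trans ((congrArg T.coord hp).trans (T.coord_point (g, c')))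

/-- The splitting of configuration spaces induced by a trivialization: the points indexed by `κ` are
recorded by their coordinates with respect to the configuration of the points indexed by `ι`. -/
def sumHomeomorph : OrderedConf (ι ⊕ κ) Y ≃ₜ OrderedConf ι Y × OrderedConf κ F where
  toFun x := (OrderedConf.restrict .inl x,
    ⟨fun k => T.coord
        ⟨(OrderedConf.restrict .inl x, x.1 (.inr k)),
          OrderedConf.inr_notMem_range_restrict_inl x k⟩,
      fun k k' h => Sum.inr_injective <| x.2 <| congrArg Subtype.val <| T.coord_injective _
        (a₁ := ⟨_, OrderedConf.inr_notMem_range_restrict_inl x k⟩)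
        (a₂ := ⟨_, OrderedConf.inr_notMem_range_restrict_inl x k'⟩) h⟩)
  invFun y := ⟨Sum.elim y.1.1 fun k => T.point (y.1, y.2.1 k),
    y.1.2.sumElim ((T.point_injective y.1).comp y.2.2)
      fun i k h => T.point_notMem_range (y.1, y.2.1 k) ⟨i, h⟩⟩
  left_inv x := Subtype.ext <| funext <| Sum.rec (fun _ => rfl) fun k =>
    T.point_coord
      ⟨(OrderedConf.restrict .inl x, x.1 (.inr k)), OrderedConf.inr_notMem_range_restrict_inl x k⟩
  right_inv y := Prod.ext rfl <| Subtype.ext <| funext fun k => T.coord_point (y.1, y.2.1 k)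
  continuous_toFun := (map_continuous _).prodMk <| .subtype_mk (continuous_pi fun _ =>
    (map_continuous T.coord).comp <| .subtype_mk
      ((map_continuous _).prodMk (OrderedConf.continuous_eval _)) _) _
  continuous_invFun := .subtype_mk (continuous_pi <| Sum.rec
    (fun i => (OrderedConf.continuous_eval i).comp continuous_fst) fun k =>
      (map_continuous T.point).comp <|
        continuous_fst.prodMk <| (OrderedConf.continuous_eval k).comp continuous_snd) _

end ComplementTrivialization

end Configuration

section CrossProduct

theorem dotProduct_smul_add_cross_dotProduct_smul_cross {R : Type*} [CommRing R]
    {u d e : Fin 3 → R} (hu : u ⬝ᵥ u = 1) (hd : u ⬝ᵥ d = 0) (he : u ⬝ᵥ e = 0) :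
    (d ⬝ᵥ e) • d + ((u ⨯₃ d) ⬝ᵥ e) • (u ⨯₃ d) = (d ⬝ᵥ d) • e := by
  have hcross : u ⨯₃ d ⨯₃ e = -((d ⬝ᵥ e) • u) := by
    rw [cross_cross_eq_smul_sub_smul, he, zero_smul, zero_sub]
  have hnorm : (u ⨯₃ d) ⬝ᵥ (u ⨯₃ d) = d ⬝ᵥ d := by
    rw [cross_dot_cross, hu, hd, one_mul, zero_mul, sub_zero]
  have hrot : u ⨯₃ d ⨯₃ u = d := by
    rw [cross_cross_eq_smul_sub_smul, hu, dotProduct_comm, hd, one_smul, zero_smul, sub_zero]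
  have htriple := cross_cross_eq_smul_sub_smul' (u ⨯₃ d) (u ⨯₃ d) e
  rw [hcross, hnorm, map_neg, map_smul, hrot] at htriple
  linear_combination (norm := module) -htriple

variable {u d e : EuclideanSpace ℝ (Fin 3)}

theorem real_inner_eq_dotProduct {ι : Type*} [Fintype ι] (x y : EuclideanSpace ℝ ι) :
    ⟪x, y⟫ = x.ofLp ⬝ᵥ y.ofLp := by
  rw [EuclideanSpace.inner_eq_star_dotProduct, star_trivial, dotProduct_comm]

/-- The cross product on Euclidean 3-space; for a unit vector `u`, the map `cross u` is the rotation
by a right angle in the plane orthogonal to `u`. -/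
def cross (u d : EuclideanSpace ℝ (Fin 3)) : EuclideanSpace ℝ (Fin 3) :=
  .toLp 2 (u.ofLp ⨯₃ d.ofLp)

theorem inner_left_cross (u d : EuclideanSpace ℝ (Fin 3)) : ⟪u, cross u d⟫ = 0 := by
  rw [real_inner_eq_dotProduct, cross, dot_self_cross]

theorem inner_right_cross (u d : EuclideanSpace ℝ (Fin 3)) : ⟪d, cross u d⟫ = 0 := by
  rw [real_inner_eq_dotProduct, cross, dot_cross_self]

theorem norm_cross (hu : ‖u‖ = 1) (hd : ⟪u, d⟫ = 0) : ‖cross u d‖ = ‖d‖ := by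
  rw [cross, InnerProductGeometry.norm_ofLp_crossProduct, hu,
    InnerProductGeometry.inner_eq_zero_iff_angle_eq_pi_div_two u d |>.1 hd, Real.sin_pi_div_two,
    one_mul, mul_one]

theorem inner_smul_add_inner_cross_smul_cross (hu : ‖u‖ = 1) (hd : ⟪u, d⟫ = 0)
    (he : ⟪u, e⟫ = 0) : ⟪d, e⟫ • d + ⟪cross u d, e⟫ • cross u d = ‖d‖ ^ 2 • e := by
  have hu' : ⟪u, u⟫ = 1 := inner_self_eq_one_of_norm_eq_one hu
  rw [← real_inner_self_eq_norm_sq]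
  simp only [real_inner_eq_dotProduct] at hu' hd he ⊢
  exact congrArg (WithLp.toLp 2) (dotProduct_smul_add_cross_dotProduct_smul_cross hu' hd he)

/-- For a unit vector `u`, the scalar multiplication by complex numbers on the plane orthogonal
to `u`, with `Complex.I` acting as `cross u`. -/
def planeSMul (u : EuclideanSpace ℝ (Fin 3)) (c : ℂ) (d : EuclideanSpace ℝ (Fin 3)) :
    EuclideanSpace ℝ (Fin 3) := c.re • d + c.im • cross u d

/-- For a unit vector `u`, the complex ratio `e / d` of two vectors of the plane orthogonal to `u`
with the complex structure `planeSMul u`. -/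
noncomputable def planeRatio (u d e : EuclideanSpace ℝ (Fin 3)) : ℂ :=
  ⟨⟪d, e⟫ / ‖d‖ ^ 2, ⟪cross u d, e⟫ / ‖d‖ ^ 2⟩

theorem inner_planeSMul (hd : ⟪u, d⟫ = 0) (c : ℂ) : ⟪u, planeSMul u c d⟫ = 0 := by
  simp [planeSMul, inner_add_right, inner_smul_right, hd, inner_left_cross]

theorem planeRatio_planeSMul (hu : ‖u‖ = 1) (hd : ⟪u, d⟫ = 0) (hd0 : d ≠ 0) (c : ℂ) :
    planeRatio u d (planeSMul u c d) = c := by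
  have hnorm : ‖d‖ ≠ 0 := norm_ne_zero_iff.2 hd0
  apply Complex.ext <;>
    simp [planeRatio, planeSMul, inner_add_right, inner_smul_right, norm_cross hu hd,
      inner_right_cross, real_inner_comm d, hnorm]

theorem planeSMul_planeRatio (hu : ‖u‖ = 1) (hd : ⟪u, d⟫ = 0) (he : ⟪u, e⟫ = 0) (hd0 : d ≠ 0) :
    planeSMul u (planeRatio u d e) d = e := by
  have hnorm : ‖d‖ ≠ 0 := norm_ne_zero_iff.2 hd0
  rw [planeSMul, planeRatio, div_eq_inv_mul, div_eq_inv_mul, mul_smul, mul_smul, ← smul_add,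
    inner_smul_add_inner_cross_smul_cross hu hd he, inv_smul_smul₀ (pow_ne_zero 2 hnorm)]

theorem continuous_cross {Z : Type*} [TopologicalSpace Z] {a b : Z → EuclideanSpace ℝ (Fin 3)}
    (ha : Continuous a) (hb : Continuous b) : Continuous fun z => cross (a z) (b z) := by
  simp only [cross, cross_apply]
  fun_prop

theorem continuous_planeSMul {Z : Type*} [TopologicalSpace Z]
    {a b : Z → EuclideanSpace ℝ (Fin 3)} {c : Z → ℂ} (ha : Continuous a) (hc : Continuous c)
    (hb : Continuous b) : Continuous fun z => planeSMul (a z) (c z) (b z) :=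
  ((Complex.continuous_re.comp hc).smul hb).add
    ((Complex.continuous_im.comp hc).smul (continuous_cross ha hb))

theorem continuous_planeRatio {Z : Type*} [TopologicalSpace Z]
    {a b c : Z → EuclideanSpace ℝ (Fin 3)} (ha : Continuous a) (hb : Continuous b)
    (hc : Continuous c) (hb0 : ∀ z, b z ≠ 0) :
    Continuous fun z => planeRatio (a z) (b z) (c z) := by
  have hb2 (z : Z) : ‖b z‖ ^ 2 ≠ 0 := pow_ne_zero 2 (norm_ne_zero_iff.2 (hb0 z))
  exact Complex.equivRealProdCLM.symm.continuous.comp <|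
    ((hb.inner hc).div (hb.norm.pow 2) hb2).prodMk
      (((continuous_cross ha hb).inner hc).div (hb.norm.pow 2) hb2)

end CrossProduct

section CrossRatio

theorem inner_inversion_eq_iff {V : Type*} [NormedAddCommGroup V] [InnerProductSpace ℝ V]
    {u x : V} (hu : ‖u‖ = 1) : ⟪u, inversion u 1 x⟫ = 1 / 2 ↔ ‖x‖ = 1 ∧ x ≠ u := by
  have hu0 : (0 : V) ≠ u := by rintro rfl; simp at hu
  have hperp (y : V) : y ∈ perpBisector u 0 ↔ ⟪u, y⟫ = 1 / 2 := by
    rw [mem_perpBisector_iff_inner_eq, vsub_eq_sub, vsub_eq_sub, zero_sub, inner_neg_right,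
      inner_sub_left, real_inner_self_eq_norm_sq, dist_zero_right, hu, real_inner_comm]
    constructor <;> intro h <;> linarith
  have hsphere := Set.ext_iff.1 (preimage_inversion_perpBisector one_ne_zero hu0) x
  rw [inversion_of_mem_sphere (by simp [hu])] at hsphere
  simpa [hperp, hu] using hsphere

/-- The displacement from `g 1` to `q` after both are stereographically projected from `g 0`, where
the projection is the restriction to the sphere of an inversion centred at `g 0`. -/
noncomputable def planeDisplacement (g : SphereConf 3) (q : TwoSphere) :
    EuclideanSpace ℝ (Fin 3) :=
  inversion (g.1 0).1 1 q - inversion (g.1 0).1 1 (g.1 1)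

variable (g : SphereConf 3) {q : TwoSphere}

theorem planeDisplacement_injective : Function.Injective (planeDisplacement g) := fun _ _ h =>
  Subtype.ext <| inversion_injective _ one_ne_zero <| sub_left_injective h

theorem planeDisplacement_apply_one : planeDisplacement g (g.1 1) = 0 := sub_self _

theorem planeDisplacement_apply_two_ne_zero : planeDisplacement g (g.1 2) ≠ 0 := fun h =>
  absurd (g.2 (planeDisplacement_injective g (h.trans (planeDisplacement_apply_one g).symm)))
    (by decide)

theorem inner_inversion_eq_half (u : TwoSphere) (hq : q ≠ u) :
    ⟪u.1, inversion u.1 1 q⟫ = 1 / 2 :=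
  (inner_inversion_eq_iff (norm_eq_of_mem_sphere u)).2
    ⟨norm_eq_of_mem_sphere q, Subtype.coe_injective.ne hq⟩

theorem inner_planeDisplacement (hq : q ≠ g.1 0) : ⟪(g.1 0).1, planeDisplacement g q⟫ = 0 := by
  rw [planeDisplacement, inner_sub_right, inner_inversion_eq_half _ hq,
    inner_inversion_eq_half _ (g.2.ne (by decide)), sub_self]

theorem inner_planeDisplacement_apply_two :
    ⟪(g.1 0).1, planeDisplacement g (g.1 2)⟫ = 0 :=
  inner_planeDisplacement g (g.2.ne (by decide))

/-- The coordinate on the sphere that sends `g 0`, `g 1`, `g 2` to `∞`, `0`, `1`; its value at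
`q = g 0` is junk. -/
noncomputable def crossRatio (q : TwoSphere) : ℂ :=
  planeRatio (g.1 0) (planeDisplacement g (g.1 2)) (planeDisplacement g q)

/-- The vector underlying `crossRatioPoint g c`. -/
noncomputable def crossRatioVec (c : ℂ) : EuclideanSpace ℝ (Fin 3) :=
  inversion (g.1 0).1 1 <|
    inversion (g.1 0).1 1 (g.1 1) + planeSMul (g.1 0) c (planeDisplacement g (g.1 2))

theorem inversion_crossRatioVec (c : ℂ) : inversion (g.1 0).1 1 (crossRatioVec g c) =
    inversion (g.1 0).1 1 (g.1 1) + planeSMul (g.1 0) c (planeDisplacement g (g.1 2)) :=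
  inversion_inversion _ one_ne_zero _

theorem norm_crossRatioVec_eq_one_and_ne (c : ℂ) :
    ‖crossRatioVec g c‖ = 1 ∧ crossRatioVec g c ≠ g.1 0 := by
  rw [← inner_inversion_eq_iff (norm_eq_of_mem_sphere _), inversion_crossRatioVec, inner_add_right,
    inner_inversion_eq_half _ (g.2.ne (by decide)),
    inner_planeSMul (inner_planeDisplacement_apply_two g), add_zero]

/-- The point of the sphere whose coordinate `crossRatio g` is `c`. -/
noncomputable def crossRatioPoint (c : ℂ) : TwoSphere :=
  ⟨crossRatioVec g c, mem_sphere_zero_iff_norm.2 (norm_crossRatioVec_eq_one_and_ne g c).1⟩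

theorem crossRatioPoint_ne (c : ℂ) : crossRatioPoint g c ≠ g.1 0 :=
  fun h => (norm_crossRatioVec_eq_one_and_ne g c).2 (congrArg Subtype.val h)

theorem planeDisplacement_crossRatioPoint (c : ℂ) : planeDisplacement g (crossRatioPoint g c) =
    planeSMul (g.1 0) c (planeDisplacement g (g.1 2)) :=
  sub_eq_of_eq_add' (inversion_crossRatioVec g c)

theorem crossRatioPoint_crossRatio (hq : q ≠ g.1 0) : crossRatioPoint g (crossRatio g q) = q :=
  planeDisplacement_injective g <| (planeDisplacement_crossRatioPoint g _).trans <|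
    planeSMul_planeRatio (norm_eq_of_mem_sphere _) (inner_planeDisplacement_apply_two g)
      (inner_planeDisplacement g hq) (planeDisplacement_apply_two_ne_zero g)

theorem crossRatio_crossRatioPoint (c : ℂ) : crossRatio g (crossRatioPoint g c) = c := by
  rw [crossRatio, planeDisplacement_crossRatioPoint]
  exact planeRatio_planeSMul (norm_eq_of_mem_sphere _) (inner_planeDisplacement_apply_two g)
    (planeDisplacement_apply_two_ne_zero g) c

theorem crossRatioPoint_zero : crossRatioPoint g 0 = g.1 1 := by
  apply planeDisplacement_injective g
  simp [planeDisplacement_crossRatioPoint, planeDisplacement_apply_one, planeSMul]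

theorem crossRatioPoint_one : crossRatioPoint g 1 = g.1 2 := by
  apply planeDisplacement_injective g
  simp [planeDisplacement_crossRatioPoint, planeSMul]

theorem crossRatioPoint_mem_range_iff {c : ℂ} :
    crossRatioPoint g c ∈ Set.range g.1 ↔ c ∈ ({0, 1} : Set ℂ) := by
  have hinj : Function.Injective (crossRatioPoint g) :=
    Function.LeftInverse.injective (crossRatio_crossRatioPoint g)
  constructor
  · rintro ⟨i, hi⟩
    fin_cases i
    · exact absurd hi.symm (crossRatioPoint_ne g c)
    · exact .inl (hinj (hi.symm.trans (crossRatioPoint_zero g).symm))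
    · exact .inr (hinj (hi.symm.trans (crossRatioPoint_one g).symm))
  · rintro (rfl | rfl)
    exacts [⟨1, (crossRatioPoint_zero g).symm⟩, ⟨2, (crossRatioPoint_one g).symm⟩]

theorem crossRatio_notMem_pair (hq : q ∉ Set.range g.1) : crossRatio g q ∉ ({0, 1} : Set ℂ) := by
  rwa [← crossRatioPoint_mem_range_iff g,
    crossRatioPoint_crossRatio g fun h => hq ⟨0, h.symm⟩]

variable {Z : Type*} [TopologicalSpace Z] {f : Z → SphereConf 3} {s : Z → TwoSphere} {c : Z → ℂ}

theorem continuous_inversion_apply_zero (hf : Continuous f) (hs : Continuous s)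
    (hne : ∀ z, s z ≠ (f z).1 0) : Continuous fun z => inversion ((f z).1 0).1 1 (s z) :=
  (continuous_subtype_val.comp ((OrderedConf.continuous_eval 0).comp hf)).inversion
    continuous_const (continuous_subtype_val.comp hs) fun z => Subtype.coe_injective.ne (hne z)

theorem continuous_inversion_apply_zero_apply_one (hf : Continuous f) :
    Continuous fun z => inversion ((f z).1 0).1 1 ((f z).1 1) :=
  continuous_inversion_apply_zero hf ((OrderedConf.continuous_eval 1).comp hf)
    fun z => (f z).2.ne (by decide)

theorem continuous_planeDisplacement (hf : Continuous f) (hs : Continuous s)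
    (hne : ∀ z, s z ≠ (f z).1 0) : Continuous fun z => planeDisplacement (f z) (s z) :=
  (continuous_inversion_apply_zero hf hs hne).sub (continuous_inversion_apply_zero_apply_one hf)

theorem continuous_planeDisplacement_apply_two (hf : Continuous f) :
    Continuous fun z => planeDisplacement (f z) ((f z).1 2) :=
  continuous_planeDisplacement hf ((OrderedConf.continuous_eval 2).comp hf)
    fun z => (f z).2.ne (by decide)

theorem continuous_crossRatio (hf : Continuous f) (hs : Continuous s)
    (hne : ∀ z, s z ≠ (f z).1 0) : Continuous fun z => crossRatio (f z) (s z) :=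
  continuous_planeRatio (continuous_subtype_val.comp ((OrderedConf.continuous_eval 0).comp hf))
    (continuous_planeDisplacement_apply_two hf) (continuous_planeDisplacement hf hs hne)
    fun z => planeDisplacement_apply_two_ne_zero (f z)

theorem continuous_crossRatioPoint (hf : Continuous f) (hc : Continuous c) :
    Continuous fun z => crossRatioPoint (f z) (c z) := by
  have hzero : Continuous fun z => ((f z).1 0).1 :=
    continuous_subtype_val.comp ((OrderedConf.continuous_eval 0).comp hf)
  refine .subtype_mk (hzero.inversion continuous_const
    ((continuous_inversion_apply_zero_apply_one hf).add
      (continuous_planeSMul hzero hc (continuous_planeDisplacement_apply_two hf))) fun z => ?_) _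
  exact (inversion_eq_center one_ne_zero).not.1 (norm_crossRatioVec_eq_one_and_ne (f z) (c z)).2

/-- The complement of three points of the sphere, trivialized by the cross-ratio. -/
noncomputable def crossRatioTrivialization :
    ComplementTrivialization (Fin 3) TwoSphere {z : ℂ // z ∉ ({0, 1} : Set ℂ)} where
  coord := ⟨fun p => ⟨crossRatio p.1.1 p.1.2, crossRatio_notMem_pair p.1.1 p.2⟩,
    .subtype_mk (continuous_crossRatio (continuous_fst.comp continuous_subtype_val)
      (continuous_snd.comp continuous_subtype_val) (ConfComplement.ne_apply · 0)) _⟩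
  point := ⟨fun q => crossRatioPoint q.1 q.2,
    continuous_crossRatioPoint continuous_fst (continuous_subtype_val.comp continuous_snd)⟩
  point_notMem_range q := (crossRatioPoint_mem_range_iff q.1).not.2 q.2.2
  point_coord p := crossRatioPoint_crossRatio p.1.1 (p.ne_apply 0)
  coord_point q := Subtype.ext (crossRatio_crossRatioPoint q.1 q.2)

end CrossRatio

/-- The homeomorphism induced by the affine map that sends `0`, `1` to `p₁`, `p₂`. -/
def complPairHomeomorph {𝕜 : Type*} [Field 𝕜] [TopologicalSpace 𝕜] [IsTopologicalRing 𝕜]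
    {p₁ p₂ : 𝕜} (h : p₁ ≠ p₂) :
    {z : 𝕜 // z ∉ ({0, 1} : Set 𝕜)} ≃ₜ {z : 𝕜 // z ∉ ({p₁, p₂} : Set 𝕜)} :=
  (affineHomeomorph (p₂ - p₁) p₁ (sub_ne_zero.2 h.symm)).subtype fun z => by
    have hone : (p₂ - p₁) * z + p₁ = p₂ ↔ z = 1 := by
      rw [← eq_sub_iff_add_eq, mul_eq_left₀ (sub_ne_zero.2 h.symm)]
    simp [hone, sub_ne_zero.2 h.symm]

/-- The splitting `Conf_n(S²) ≃ Conf₃(S²) × M²_{n-3}(ℂ)`, with values in the first three points and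
in the cross-ratios of the remaining ones, normalised to send the second and third point to `p₁`
and `p₂`. -/
noncomputable def sphereConfHomeomorph {n : ℕ} (hn : 3 ≤ n) {p₁ p₂ : ℂ} (h : p₁ ≠ p₂) :
    SphereConf n ≃ₜ SphereConf 3 × ConfAvoidTwo (n - 3) p₁ p₂ :=
  (OrderedConf.reindex (finSumFinEquiv.trans (finCongr (Nat.add_sub_cancel' hn)))).trans <|
    (crossRatioTrivialization.congrFiber (complPairHomeomorph h)).sumHomeomorph.trans <|
      .prodCongr (.refl _) (OrderedConf.subtypeHomeomorph _)

theorem fst_comp_sphereConfHomeomorph {n : ℕ} (hn : 3 ≤ n) {p₁ p₂ : ℂ} (h : p₁ ≠ p₂) :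
    .comp .fst (sphereConfHomeomorph hn h).toHomotopyEquiv.toFun =
      OrderedConf.restrict (Y := TwoSphere) (Fin.castLEEmb hn) := rfl

/-- For `n > 3` there is a short exact sequence
`1 → π₁(M²_{n-3}(ℂ)) → Bₙ(S²) → B₃(S²) → 1`: a surjective homomorphism from
`π₁(Conf_n(S²), x)` onto `π₁(Conf₃(S²))` (based at the first three coordinates of `x`)
whose kernel is isomorphic to the fundamental group of the configuration space of
`n - 3` points in `ℂ ∖ {p₁, p₂}`, for distinct points `p₁ ≠ p₂` of `ℂ`. -/
theorem sphere_pureBraid_ses (n : ℕ) (hn : 3 < n) (x : SphereConf n) :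
    ∃ φ : FundamentalGroup (SphereConf n) x →*
        FundamentalGroup (SphereConf 3)
          ⟨fun i => x.1 (Fin.castLE hn.le i), x.2.comp (Fin.castLE_injective hn.le)⟩,
      Function.Surjective φ ∧
      ∀ p₁ p₂ : ℂ, p₁ ≠ p₂ →
        ∃ y : ConfAvoidTwo (n - 3) p₁ p₂,
          Nonempty (φ.ker ≃* FundamentalGroup (ConfAvoidTwo (n - 3) p₁ p₂) y) := by
  refine ⟨FundamentalGroup.map (OrderedConf.restrict (Fin.castLEEmb hn.le)) x, ?_,
    fun p₁ p₂ hp => ?_⟩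
  · exact surjective_fundamentalGroup_map_of_fst _
      (fst_comp_sphereConfHomeomorph hn.le (zero_ne_one (α := ℂ))) x
  · exact ⟨_, nonempty_ker_fundamentalGroup_map_mulEquiv_of_fst _
      (fst_comp_sphereConfHomeomorph hn.le hp) x⟩
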